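/- Let ν ∈ ℂ with Re ν > −1 and let φ ∈ 𝒮⁺. Then for every x > 0 one has the inversion formula 𝓗_ν(𝓗_ν(φ))(x) = φ(x). -/

import Mathlib

open MeasureTheory Filter Set

noncomputable def besselJ (ν : ℂ) (z : ℝ) : ℂ :=
  ∑' k : ℕ, ((-1 : ℂ) ^ k / (Complex.Gamma (k + 1) * Complex.Gamma (ν + k + 1))) *
    ((z : ℂ) / 2) ^ (2 * (k : ℂ) + ν)

noncomputable def hankel (ν : ℂ) (φ : ℝ → ℂ) (x : ℝ) : ℂ :=
  (x : ℂ) ^ (-ν) * ∫ y in Ioi (0:ℝ), φ y * besselJ ν (x * y) * (y : ℂ) ^ (ν + 1)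

noncomputable def DIter : ℕ → (ℝ → ℂ) → (ℝ → ℂ)
  | 0, φ => φ
  | k + 1, φ => fun x => (1 / (x : ℂ)) * deriv (DIter k φ) x

def SPlus (φ : ℝ → ℂ) : Prop :=
  ContDiffOn ℝ (⊤ : ℕ∞) φ (Ioi 0) ∧
  ∀ m k : ℕ, ∃ C : ℝ, ∀ x > (0:ℝ), ‖(x : ℂ) ^ m * DIter k φ x‖ ≤ C

noncomputable def cliffordCoeff (ν : ℂ) (k : ℕ) : ℂ :=
  (-1 : ℂ) ^ k / (Complex.Gamma (k + 1) * Complex.Gamma (ν + k + 1))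

/-- The Bessel–Clifford function, for which `J_ν(z) = (z/2)^ν * besselClifford ν (z²/4)`. -/
noncomputable def besselClifford (ν : ℂ) (u : ℝ) : ℂ :=
  ∑' k : ℕ, cliffordCoeff ν k * (u : ℂ) ^ k

theorem add_natCast_add_one_ne_zero {ν : ℂ} (hν : -1 < ν.re) (k : ℕ) : ν + k + 1 ≠ 0 := by
  intro h
  have := congrArg Complex.re h
  simp at this
  have hk : (0 : ℝ) ≤ k := k.cast_nonneg
  linarith

theorem Gamma_add_natCast_add_one_ne_zero {ν : ℂ} (hν : -1 < ν.re) (k : ℕ) :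
    Complex.Gamma (ν + k + 1) ≠ 0 := by
  apply Complex.Gamma_ne_zero_of_re_pos
  simp
  have hk : (0 : ℝ) ≤ k := k.cast_nonneg
  linarith

theorem cliffordCoeff_shift {ν : ℂ} (k : ℕ) :
    cliffordCoeff ν (k + 1) * ((k : ℂ) + 1) = -cliffordCoeff (ν + 1) k := by
  have h1 : ((k : ℂ) + 1) ≠ 0 := Nat.cast_add_one_ne_zero k
  have h3 : Complex.Gamma ((k : ℂ) + 1) ≠ 0 := by
    rw [Complex.Gamma_nat_eq_factorial]; exact_mod_cast k.factorial_ne_zero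
  unfold cliffordCoeff
  push_cast
  rw [Complex.Gamma_add_one _ h1, show ν + ((k : ℂ) + 1) + 1 = ν + 1 + k + 1 by ring, pow_succ]
  by_cases hG : Complex.Gamma (ν + 1 + k + 1) = 0
  · simp [hG]
  · field_simp

theorem cliffordCoeff_eq_mul {ν : ℂ} (hν : -1 < ν.re) (k : ℕ) :
    cliffordCoeff ν k = (ν + k + 1) * cliffordCoeff (ν + 1) k := by
  have h2 := add_natCast_add_one_ne_zero hν k
  have h4 := Gamma_add_natCast_add_one_ne_zero hν k
  have h3 : Complex.Gamma ((k : ℂ) + 1) ≠ 0 := by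
    rw [Complex.Gamma_nat_eq_factorial]; exact_mod_cast k.factorial_ne_zero
  unfold cliffordCoeff
  rw [show ν + 1 + (k : ℂ) + 1 = ν + k + 1 + 1 by ring, Complex.Gamma_add_one _ h2]
  field_simp

theorem re_add_le_norm (ν : ℂ) (k : ℕ) : ν.re + k + 1 ≤ ‖ν + k + 1‖ := by
  have := Complex.re_le_norm (ν + k + 1)
  simpa using this

theorem norm_inv_Gamma_le {ν : ℂ} (hν : -1 < ν.re) (k : ℕ) :
    ‖(Complex.Gamma (ν + k + 1))⁻¹‖ ≤
      ‖(Complex.Gamma (ν + 1))⁻¹‖ * ((ν.re + 1)⁻¹) ^ k := by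
  induction k with
  | zero => simp
  | succ k ih =>
    have h0 : 0 < ν.re + 1 := by linarith
    have h2 := add_natCast_add_one_ne_zero hν k
    push_cast
    rw [show ν + ((k : ℂ) + 1) + 1 = ν + k + 1 + 1 by ring, Complex.Gamma_add_one _ h2, mul_inv,
      norm_mul, pow_succ, ← mul_assoc, mul_comm]
    gcongr
    rw [norm_inv]
    gcongr
    have := re_add_le_norm ν k
    have hk : (0 : ℝ) ≤ k := k.cast_nonneg
    linarith

theorem norm_cliffordCoeff (ν : ℂ) (k : ℕ) :
    ‖cliffordCoeff ν k‖ = ‖(Complex.Gamma (ν + k + 1))⁻¹‖ / (k.factorial : ℝ) := by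
  unfold cliffordCoeff
  rw [Complex.Gamma_nat_eq_factorial]
  simp [div_eq_mul_inv, mul_comm]

theorem norm_cliffordCoeff_le {ν : ℂ} (hν : -1 < ν.re) (k : ℕ) :
    ‖cliffordCoeff ν k‖ ≤
      ‖(Complex.Gamma (ν + 1))⁻¹‖ * (((ν.re + 1)⁻¹) ^ k / (k.factorial : ℝ)) := by
  rw [norm_cliffordCoeff, ← mul_div_assoc]
  gcongr
  exact norm_inv_Gamma_le hν k

theorem summable_norm_cliffordCoeff_mul_pow {ν : ℂ} (hν : -1 < ν.re) {r : ℝ} (hr : 0 ≤ r) :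
    Summable fun k : ℕ => ‖cliffordCoeff ν k‖ * r ^ k := by
  have hs := (Real.summable_pow_div_factorial ((ν.re + 1)⁻¹ * r)).mul_left
    ‖(Complex.Gamma (ν + 1))⁻¹‖
  refine Summable.of_nonneg_of_le (fun k => by positivity) (fun k => ?_) hs
  calc _ ≤ ‖(Complex.Gamma (ν + 1))⁻¹‖ * (((ν.re + 1)⁻¹) ^ k / (k.factorial : ℝ)) * r ^ k := by
        gcongr; exact norm_cliffordCoeff_le hν k
    _ = _ := by rw [mul_pow]; ring

theorem summable_besselClifford {ν : ℂ} (hν : -1 < ν.re) (u : ℝ) :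
    Summable fun k : ℕ => cliffordCoeff ν k * (u : ℂ) ^ k := by
  apply Summable.of_norm
  simpa using summable_norm_cliffordCoeff_mul_pow hν (abs_nonneg u)

theorem hasDerivAt_besselClifford {ν : ℂ} (hν : -1 < ν.re) (u : ℝ) :
    HasDerivAt (besselClifford ν) (-besselClifford (ν + 1) u) u := by
  have hν1 : -1 < (ν + 1).re := by simp; linarith
  set R : ℝ := |u| + 1
  have hR : 0 ≤ R := by positivity
  have hu : u ∈ Metric.ball (0 : ℝ) R := by simp [R]
  let b : ℕ → ℝ := fun n => ‖cliffordCoeff ν n * (n : ℂ)‖ * R ^ (n - 1)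
  have hshift : ∀ n : ℕ, cliffordCoeff ν (n + 1) * ((n + 1 : ℕ) : ℂ) = -cliffordCoeff (ν + 1) n := by
    intro n; push_cast; exact cliffordCoeff_shift n
  have hb : Summable b := by
    rw [← summable_nat_add_iff 1]
    refine (summable_norm_cliffordCoeff_mul_pow hν1 hR).congr fun n => ?_
    simp only [b, hshift, norm_neg, Nat.add_sub_cancel]
  have key := hasDerivAt_tsum_of_isPreconnected (𝕜 := ℝ)
    (g := fun (n : ℕ) (y : ℝ) => cliffordCoeff ν n * (y : ℂ) ^ n)
    (g' := fun (n : ℕ) (y : ℝ) => cliffordCoeff ν n * ((n : ℂ) * (y : ℂ) ^ (n - 1)))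
    hb Metric.isOpen_ball (convex_ball (0 : ℝ) R).isPreconnected ?_ ?_ hu
    (summable_besselClifford hν u) hu
  · convert! key using 1
    have hsum : Summable fun n : ℕ => cliffordCoeff ν n * ((n : ℂ) * (u : ℂ) ^ (n - 1)) := by
      refine Summable.of_norm_bounded hb fun n => ?_
      simp only [b, ← mul_assoc, norm_mul, norm_pow, Complex.norm_real]
      gcongr
      simp [R]
    rw [hsum.tsum_eq_zero_add]
    simp only [← mul_assoc, hshift, Nat.add_sub_cancel]
    simp [besselClifford, tsum_neg]
  · intro n y _
    have h := ((Complex.ofRealCLM.hasDerivAt (x := y)).pow n).const_mul (cliffordCoeff ν n)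
    simpa using h
  · intro n y hy
    simp only [b, ← mul_assoc, norm_mul, norm_pow, Complex.norm_real]
    gcongr
    simpa using (Metric.mem_ball.1 hy).le

theorem continuous_besselClifford {ν : ℂ} (hν : -1 < ν.re) : Continuous (besselClifford ν) :=
  continuous_iff_continuousAt.2 fun u => (hasDerivAt_besselClifford hν u).continuousAt

theorem besselClifford_recurrence {ν : ℂ} (hν : -1 < ν.re) (u : ℝ) :
    besselClifford ν u =
      (ν + 1) * besselClifford (ν + 1) u - u * besselClifford (ν + 2) u := by
  have hν1 : -1 < (ν + 1).re := by simp; linarith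
  have hν2 : -1 < (ν + 1 + 1).re := by simp; linarith
  have hs : Summable fun k : ℕ => (k : ℂ) * cliffordCoeff (ν + 1) k * (u : ℂ) ^ k := by
    refine ((summable_besselClifford hν u).sub
      ((summable_besselClifford hν1 u).mul_left (ν + 1))).congr fun k => ?_
    rw [cliffordCoeff_eq_mul hν]; ring
  have hdiff : (∑' k : ℕ, (k : ℂ) * cliffordCoeff (ν + 1) k * (u : ℂ) ^ k) =
      -(u * besselClifford (ν + 2) u) := by
    rw [hs.tsum_eq_zero_add, besselClifford, ← tsum_mul_left, ← tsum_neg]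
    simp only [Nat.cast_zero, zero_mul, zero_add]
    refine tsum_congr fun k => ?_
    push_cast
    have := cliffordCoeff_shift (ν := ν + 1) k
    rw [show ν + 2 = ν + 1 + 1 by ring, mul_comm ((k : ℂ) + 1), this]
    ring
  rw [sub_eq_add_neg, ← hdiff, besselClifford, besselClifford, ← tsum_mul_left,
    ← ((summable_besselClifford hν1 u).mul_left (ν + 1)).tsum_add hs]
  refine tsum_congr fun k => ?_
  rw [cliffordCoeff_eq_mul hν]; ring

theorem exists_norm_besselClifford_le_of_neg_half_le {ν : ℂ} (hν : -(1 / 2) ≤ ν.re) :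
    ∃ C : ℝ, ∀ u ≥ (0 : ℝ), ‖besselClifford ν u‖ ≤ C := by
  have h0 : -1 < ν.re := by linarith
  have h1 : -1 < (ν + 1).re := by simp; linarith
  let W : ℝ → ℝ := fun u => Complex.normSq (besselClifford ν u) +
    u * Complex.normSq (besselClifford (ν + 1) u)
  have hsq : ∀ (f : ℝ → ℂ) (f' : ℂ) (u : ℝ), HasDerivAt f f' u →
      HasDerivAt (fun u => Complex.normSq (f u))
        (2 * ((f u).re * f'.re + (f u).im * f'.im)) u := by
    intro f f' u h
    have hr : HasDerivAt (fun u => (f u).re) f'.re u :=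
      (Complex.reCLM.hasFDerivAt.comp_hasDerivAt u h)
    have hi : HasDerivAt (fun u => (f u).im) f'.im u :=
      (Complex.imCLM.hasFDerivAt.comp_hasDerivAt u h)
    simp only [Complex.normSq_apply]
    convert! (hr.mul hr).add (hi.mul hi) using 1
    ring
  have hW : ∀ u, HasDerivAt W
      (-(2 * ν.re + 1) * Complex.normSq (besselClifford (ν + 1) u)) u := by
    intro u
    have d0 := hsq _ _ u (hasDerivAt_besselClifford h0 u)
    have d1 := hsq _ _ u (hasDerivAt_besselClifford h1 u)
    convert! d0.add ((hasDerivAt_id u).mul d1) using 1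
    have hrec := besselClifford_recurrence h0 u
    rw [show ν + 2 = ν + 1 + 1 by ring] at hrec
    rw [hrec]
    simp [Complex.normSq_apply]
    ring
  have hanti : AntitoneOn W (Ici 0) := by
    apply antitoneOn_of_deriv_nonpos (convex_Ici 0)
    · exact fun u _ => (hW u).continuousAt.continuousWithinAt
    · exact fun u _ => (hW u).differentiableAt.differentiableWithinAt
    · intro u _
      rw [(hW u).deriv]
      have := Complex.normSq_nonneg (besselClifford (ν + 1) u)
      nlinarith
  refine ⟨‖besselClifford ν 0‖, fun u hu => ?_⟩
  have h := hanti (mem_Ici.2 le_rfl) (mem_Ici.2 hu) hu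
  simp only [W, zero_mul, add_zero] at h
  have h2 := mul_nonneg hu (Complex.normSq_nonneg (besselClifford (ν + 1) u))
  simp only [Complex.normSq_eq_norm_sq] at h h2
  exact le_of_sq_le_sq (by linarith) (norm_nonneg _)

theorem exists_norm_besselClifford_le {ν : ℂ} (hν : -1 < ν.re) :
    ∃ C : ℝ, 0 ≤ C ∧ ∀ u ≥ (0 : ℝ), ‖besselClifford ν u‖ ≤ C * (1 + u) := by
  obtain ⟨A, hA⟩ := exists_norm_besselClifford_le_of_neg_half_le (ν := ν + 1)
    (by simp; linarith)
  obtain ⟨B, hB⟩ := exists_norm_besselClifford_le_of_neg_half_le (ν := ν + 2)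
    (by simp; linarith)
  have hA0 : 0 ≤ A := (norm_nonneg _).trans (hA 0 le_rfl)
  have hB0 : 0 ≤ B := (norm_nonneg _).trans (hB 0 le_rfl)
  refine ⟨‖ν + 1‖ * A + B, by positivity, fun u hu => ?_⟩
  rw [besselClifford_recurrence hν]
  refine (norm_sub_le _ _).trans ?_
  rw [norm_mul, norm_mul, Complex.norm_real, Real.norm_of_nonneg hu]
  have h1 : ‖ν + 1‖ * ‖besselClifford (ν + 1) u‖ ≤ ‖ν + 1‖ * A := by gcongr; exact hA u hu
  have h2 : u * ‖besselClifford (ν + 2) u‖ ≤ u * B := by gcongr; exact hB u hu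
  have h3 : 0 ≤ ‖ν + 1‖ * A * u := by positivity
  nlinarith

theorem exists_pow_mul_norm_besselClifford_le (n : ℕ) : ∀ {ν : ℂ}, -1 < ν.re →
    ∃ C : ℝ, 0 ≤ C ∧ ∀ u ≥ (0 : ℝ), u ^ n * ‖besselClifford (ν + (2 * n : ℕ)) u‖ ≤ C * (1 + u) := by
  induction n with
  | zero => intro ν hν; simpa using exists_norm_besselClifford_le hν
  | succ n ih =>
    intro ν hν
    obtain ⟨A, hA0, hA⟩ := ih hν
    obtain ⟨B, hB0, hB⟩ := ih (ν := ν + 1) (by simp; linarith)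
    set μ : ℂ := ν + (2 * n : ℕ)
    have hμ : -1 < μ.re := by
      have hn : (0 : ℝ) ≤ n := n.cast_nonneg
      simp [μ]; linarith
    refine ⟨‖μ + 1‖ * B + A, by positivity, fun u hu => ?_⟩
    have hrec : (u : ℂ) * besselClifford (μ + 2) u =
        (μ + 1) * besselClifford (μ + 1) u - besselClifford μ u := by
      rw [besselClifford_recurrence hμ u]; ring
    have e1 : ν + (2 * (n + 1) : ℕ) = μ + 2 := by simp only [μ]; push_cast; ring
    have e2 : ν + 1 + (2 * n : ℕ) = μ + 1 := by simp only [μ]; ring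
    rw [e1]
    have hB' := hB u hu
    rw [e2] at hB'
    calc u ^ (n + 1) * ‖besselClifford (μ + 2) u‖
        = u ^ n * ‖(u : ℂ) * besselClifford (μ + 2) u‖ := by
          rw [norm_mul, Complex.norm_real, Real.norm_of_nonneg hu]; ring
      _ ≤ u ^ n * (‖μ + 1‖ * ‖besselClifford (μ + 1) u‖ + ‖besselClifford μ u‖) := by
          rw [hrec]; gcongr; exact (norm_sub_le _ _).trans (by rw [norm_mul])
      _ = ‖μ + 1‖ * (u ^ n * ‖besselClifford (μ + 1) u‖) + u ^ n * ‖besselClifford μ u‖ := by ring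
      _ ≤ ‖μ + 1‖ * (B * (1 + u)) + A * (1 + u) := by exact add_le_add (by gcongr) (hA u hu)
      _ = _ := by ring

/-- Continuous functions on `(0, ∞)` that are bounded near `0` and decay rapidly at infinity. -/
structure RapidDecay (f : ℝ → ℂ) : Prop where
  continuousOn : ContinuousOn f (Ioi 0)
  bound : ∀ m : ℕ, ∃ C : ℝ, ∀ s > (0 : ℝ), s ^ m * ‖f s‖ ≤ C

theorem RapidDecay.mul_of_linear_bound {f g : ℝ → ℂ} (hf : RapidDecay f)
    (hg : ContinuousOn g (Ioi 0)) {C : ℝ} (hC : ∀ s > (0 : ℝ), ‖g s‖ ≤ C * (1 + s)) :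
    RapidDecay fun s => f s * g s := by
  refine ⟨hf.continuousOn.mul hg, fun m => ?_⟩
  obtain ⟨A, hA⟩ := hf.bound m
  obtain ⟨B, hB⟩ := hf.bound (m + 1)
  have hC0 : 0 ≤ C := by
    have := (norm_nonneg _).trans (hC 1 one_pos)
    linarith
  refine ⟨C * (A + B), fun s hs => ?_⟩
  calc s ^ m * ‖f s * g s‖ ≤ s ^ m * (‖f s‖ * (C * (1 + s))) := by
        rw [norm_mul]; gcongr; exact hC s hs
    _ = C * (s ^ m * ‖f s‖ + s ^ (m + 1) * ‖f s‖) := by ring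
    _ ≤ C * (A + B) := by gcongr; exacts [hA s hs, hB s hs]

theorem RapidDecay.mul_pow {f : ℝ → ℂ} (hf : RapidDecay f) (n : ℕ) :
    RapidDecay fun s => f s * (s : ℂ) ^ n := by
  refine ⟨hf.continuousOn.mul (by fun_prop), fun m => ?_⟩
  obtain ⟨A, hA⟩ := hf.bound (m + n)
  refine ⟨A, fun s hs => ?_⟩
  have h := hA s hs
  rw [norm_mul, norm_pow, Complex.norm_real, Real.norm_of_nonneg hs.le]
  calc _ = s ^ (m + n) * ‖f s‖ := by ring
    _ ≤ A := h

theorem RapidDecay.mul_one_add {f : ℝ → ℂ} (hf : RapidDecay f) :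
    RapidDecay fun s => f s * (1 + s : ℂ) := by
  refine hf.mul_of_linear_bound (C := 1) (by fun_prop) fun s hs => ?_
  refine (norm_add_le _ _).trans ?_
  rw [Complex.norm_real, Real.norm_of_nonneg hs.le]
  simp

theorem RapidDecay.mul_besselClifford {f : ℝ → ℂ} (hf : RapidDecay f) {ν : ℂ} (hν : -1 < ν.re)
    {t : ℝ} (ht : 0 ≤ t) : RapidDecay fun s => f s * besselClifford ν (t * s) := by
  obtain ⟨C, hC0, hC⟩ := exists_norm_besselClifford_le hν
  refine hf.mul_of_linear_bound (C := C * (1 + t))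
    ((continuous_besselClifford hν).comp (continuous_const_mul t)).continuousOn fun s hs => ?_
  refine (hC (t * s) (by positivity)).trans ?_
  rw [mul_assoc]
  gcongr
  nlinarith

theorem RapidDecay.isBigO_atTop {f : ℝ → ℂ} (hf : RapidDecay f) (m : ℕ) :
    f =O[atTop] fun s : ℝ => s ^ (-(m : ℝ)) := by
  obtain ⟨C, hC⟩ := hf.bound m
  refine Asymptotics.IsBigO.of_bound C ?_
  filter_upwards [eventually_gt_atTop 0] with s hs
  rw [Real.norm_of_nonneg (by positivity), Real.rpow_neg hs.le, Real.rpow_natCast,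
    ← div_eq_mul_inv, le_div_iff₀ (by positivity), mul_comm]
  exact hC s hs

theorem RapidDecay.isBigO_zero {f : ℝ → ℂ} (hf : RapidDecay f) :
    f =O[nhdsWithin 0 (Ioi 0)] fun s : ℝ => s ^ (-(0 : ℝ)) := by
  obtain ⟨C, hC⟩ := hf.bound 0
  refine Asymptotics.IsBigO.of_bound C ?_
  filter_upwards [self_mem_nhdsWithin] with s hs
  simpa using hC s hs

theorem RapidDecay.integrableOn {f : ℝ → ℂ} (hf : RapidDecay f) {ν : ℂ} (hν : -1 < ν.re) :
    IntegrableOn (fun s : ℝ => f s * (s : ℂ) ^ ν) (Ioi 0) := by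
  obtain ⟨m, hm⟩ := exists_nat_gt (ν + 1).re
  have h := mellinConvergent_of_isBigO_rpow (s := ν + 1)
    (hf.continuousOn.locallyIntegrableOn measurableSet_Ioi) (hf.isBigO_atTop m) hm
    hf.isBigO_zero (by simp; linarith)
  simpa [MellinConvergent, mul_comm] using h

theorem norm_ofReal_cpow {s : ℝ} (hs : 0 < s) (μ : ℂ) : ‖(s : ℂ) ^ μ‖ = s ^ μ.re :=
  Complex.norm_cpow_eq_rpow_re_of_pos hs μ

theorem RapidDecay.tendsto_zero {f : ℝ → ℂ} (hf : RapidDecay f) {μ : ℂ} (hμ : 0 < μ.re) :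
    Tendsto (fun s : ℝ => f s * (s : ℂ) ^ μ) (nhdsWithin 0 (Ioi 0)) (nhds 0) := by
  obtain ⟨C, hC⟩ := hf.bound 0
  have h : Tendsto (fun s : ℝ => C * s ^ μ.re) (nhdsWithin 0 (Ioi 0)) (nhds 0) := by
    have := ((Real.continuousAt_rpow_const 0 μ.re (Or.inr hμ.le)).tendsto.const_mul C)
    rw [Real.zero_rpow hμ.ne', mul_zero] at this
    exact this.mono_left nhdsWithin_le_nhds
  refine squeeze_zero_norm' ?_ h
  filter_upwards [self_mem_nhdsWithin] with s hs
  rw [norm_mul, norm_ofReal_cpow hs]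
  have := Real.rpow_nonneg (le_of_lt hs) μ.re
  gcongr
  simpa using hC s hs

theorem RapidDecay.tendsto_atTop {f : ℝ → ℂ} (hf : RapidDecay f) (μ : ℂ) :
    Tendsto (fun s : ℝ => f s * (s : ℂ) ^ μ) atTop (nhds 0) := by
  obtain ⟨m, hm⟩ := exists_nat_gt μ.re
  obtain ⟨C, hC⟩ := hf.bound m
  have h : Tendsto (fun s : ℝ => C * s ^ (-(m - μ.re))) atTop (nhds 0) := by
    simpa using (tendsto_rpow_neg_atTop (sub_pos.2 hm)).const_mul C
  refine squeeze_zero_norm' ?_ h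
  filter_upwards [eventually_gt_atTop 0] with s hs
  rw [norm_mul, norm_ofReal_cpow hs, show -((m : ℝ) - μ.re) = μ.re - m by ring,
    Real.rpow_sub hs, Real.rpow_natCast]
  have := Real.rpow_nonneg (le_of_lt hs) μ.re
  calc ‖f s‖ * s ^ μ.re = (s ^ m * ‖f s‖) * (s ^ μ.re / s ^ m) := by field_simp
    _ ≤ _ := by gcongr; exact hC s hs

/-- The Hankel transform in the variables `s = y² / 2`, `t = x² / 2`. -/
noncomputable def cliffordTransform (ν : ℂ) (f : ℝ → ℂ) (t : ℝ) : ℂ :=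
  ∫ s in Ioi (0 : ℝ), f s * besselClifford ν (t * s) * (s : ℂ) ^ ν

theorem norm_cliffordTransform_integrand_le {ν : ℂ} {C : ℝ}
    (hC : ∀ u ≥ (0 : ℝ), ‖besselClifford ν u‖ ≤ C * (1 + u)) (f : ℝ → ℂ) {s t : ℝ}
    (hs : 0 < s) (ht : 0 ≤ t) :
    ‖f s * besselClifford ν (t * s) * (s : ℂ) ^ ν‖ ≤
      C * (1 + t) * ‖f s * (1 + s : ℂ) * (s : ℂ) ^ ν‖ := by
  have hC0 : 0 ≤ C := by simpa using (norm_nonneg _).trans (hC 0 le_rfl)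
  have h1 : ‖(1 + s : ℂ)‖ = 1 + s := by
    rw [← Complex.ofReal_one, ← Complex.ofReal_add, Complex.norm_real,
      Real.norm_of_nonneg (by positivity)]
  simp only [norm_mul, h1]
  have h2 : ‖besselClifford ν (t * s)‖ ≤ C * ((1 + t) * (1 + s)) :=
    (hC _ (by positivity)).trans (by gcongr; nlinarith)
  calc _ ≤ ‖f s‖ * (C * ((1 + t) * (1 + s))) * ‖(s : ℂ) ^ ν‖ := by gcongr
    _ = _ := by ring

theorem RapidDecay.exists_norm_cliffordTransform_le {f : ℝ → ℂ} (hf : RapidDecay f) {ν : ℂ}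
    (hν : -1 < ν.re) :
    ∃ C : ℝ, ∀ t > (0 : ℝ), ‖cliffordTransform ν f t‖ ≤ C * (1 + t) := by
  obtain ⟨C, hC0, hC⟩ := exists_norm_besselClifford_le hν
  refine ⟨C * ∫ s in Ioi (0 : ℝ), ‖f s * (1 + s : ℂ) * (s : ℂ) ^ ν‖, fun t ht => ?_⟩
  have h := norm_integral_le_of_norm_le (μ := volume.restrict (Ioi (0 : ℝ)))
    (f := fun s : ℝ => f s * besselClifford ν (t * s) * (s : ℂ) ^ ν)
    ((hf.mul_one_add.integrableOn hν).norm.const_mul (C * (1 + t)))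
    (ae_restrict_of_forall_mem measurableSet_Ioi fun s hs =>
      norm_cliffordTransform_integrand_le hC f hs ht.le)
  rw [integral_const_mul] at h
  refine h.trans (le_of_eq (by ring))

theorem RapidDecay.continuousOn_cliffordTransform {f : ℝ → ℂ} (hf : RapidDecay f) {ν : ℂ}
    (hν : -1 < ν.re) : ContinuousOn (cliffordTransform ν f) (Ioi 0) := by
  obtain ⟨C, hC0, hC⟩ := exists_norm_besselClifford_le hν
  intro t ht
  apply ContinuousAt.continuousWithinAt
  refine continuousAt_of_dominated
    (bound := fun s => C * (1 + (t + 1)) * ‖f s * (1 + s : ℂ) * (s : ℂ) ^ ν‖) ?_ ?_ ?_ ?_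
  · filter_upwards [Ioi_mem_nhds ht] with x hx
    exact ((hf.mul_besselClifford hν (le_of_lt hx)).integrableOn hν).aestronglyMeasurable
  · filter_upwards [Ioi_mem_nhds ht, Iio_mem_nhds (lt_add_one t)] with x hx hx'
    refine ae_restrict_of_forall_mem measurableSet_Ioi fun s hs => ?_
    refine (norm_cliffordTransform_integrand_le hC f hs (le_of_lt hx)).trans ?_
    gcongr
    exact le_of_lt hx'
  · exact (hf.mul_one_add.integrableOn hν).norm.const_mul _
  · refine Eventually.of_forall fun s => ?_
    have := (continuous_besselClifford hν).comp (continuous_mul_const s)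
    exact ((this.continuousAt (x := t)).const_mul (f s)).mul_const _

theorem cliffordTransform_eq_neg_of_hasDerivAt {f f' : ℝ → ℂ} (hf : RapidDecay f)
    (hf' : RapidDecay f') (hderiv : ∀ s > (0 : ℝ), HasDerivAt f (f' s) s) {ν : ℂ}
    (hν : -1 < ν.re) {t : ℝ} (ht : 0 < t) :
    cliffordTransform ν f t = -cliffordTransform (ν + 1) f' t := by
  have hν1 : -1 < (ν + 1).re := by simp; linarith
  have hne : ν + 1 ≠ 0 := by simpa using add_natCast_add_one_ne_zero hν 0
  have hv : ∀ s ∈ Ioi (0 : ℝ),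
      HasDerivAt (fun s : ℝ => besselClifford (ν + 1) (t * s) * (s : ℂ) ^ (ν + 1))
        (besselClifford ν (t * s) * (s : ℂ) ^ ν) s := by
    intro s hs
    have hs0 : (s : ℂ) ≠ 0 := by exact_mod_cast (ne_of_gt hs)
    have d1 : HasDerivAt (fun s : ℝ => besselClifford (ν + 1) (t * s))
        (t • (-besselClifford (ν + 1 + 1) (t * s))) s := by
      have hm : HasDerivAt (fun s : ℝ => t * s) t s := by
        simpa using (hasDerivAt_id s).const_mul t
      exact (hasDerivAt_besselClifford hν1 (t * s)).scomp s hm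
    have d2 := hasDerivAt_ofReal_cpow_const (ne_of_gt hs) hne
    convert! d1.mul d2 using 1
    rw [besselClifford_recurrence hν, show ν + 2 = ν + 1 + 1 by ring, add_sub_cancel_right,
      Complex.cpow_add _ _ hs0, Complex.cpow_one, Complex.real_smul]
    push_cast
    ring
  have h1 : IntegrableOn (f * fun s : ℝ => besselClifford ν (t * s) * (s : ℂ) ^ ν) (Ioi 0) :=
    ((hf.mul_besselClifford hν ht.le).integrableOn hν).congr_fun
      (fun s _ => by simp [mul_assoc]) measurableSet_Ioi
  have h2 : IntegrableOn
      (f' * fun s : ℝ => besselClifford (ν + 1) (t * s) * (s : ℂ) ^ (ν + 1)) (Ioi 0) :=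
    ((hf'.mul_besselClifford hν1 ht.le).integrableOn hν1).congr_fun
      (fun s _ => by simp [mul_assoc]) measurableSet_Ioi
  have hfE := hf.mul_besselClifford hν1 ht.le
  have hfeq : (f * fun s : ℝ => besselClifford (ν + 1) (t * s) * (s : ℂ) ^ (ν + 1)) =
      fun s : ℝ => f s * besselClifford (ν + 1) (t * s) * (s : ℂ) ^ (ν + 1) := by
    funext s; simp [mul_assoc]
  have key := integral_Ioi_mul_deriv_eq_deriv_mul (a := (0 : ℝ)) (a' := (0 : ℂ)) (b' := (0 : ℂ))
    hderiv hv h1 h2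
    (by rw [hfeq]; exact hfE.tendsto_zero (by simp; linarith))
    (by rw [hfeq]; exact hfE.tendsto_atTop _)
  simp only [cliffordTransform, mul_assoc]
  rw [key]
  simp

theorem cliffordTransform_eq_iterate {g : ℕ → ℝ → ℂ} (hg : ∀ k, RapidDecay (g k))
    (hderiv : ∀ k, ∀ s > (0 : ℝ), HasDerivAt (g k) (g (k + 1) s) s) {ν : ℂ}
    (hν : -1 < ν.re) {t : ℝ} (ht : 0 < t) (n : ℕ) :
    cliffordTransform ν (g 0) t = (-1) ^ n * cliffordTransform (ν + n) (g n) t := by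
  induction n with
  | zero => simp
  | succ n ih =>
    have hn : -1 < (ν + n).re := by
      have : (0 : ℝ) ≤ n := n.cast_nonneg
      simp; linarith
    rw [ih, cliffordTransform_eq_neg_of_hasDerivAt (hg n) (hg (n + 1)) (hderiv n) hn ht]
    push_cast
    rw [add_assoc]
    ring

theorem exists_pow_mul_norm_cliffordTransform_le {g : ℕ → ℝ → ℂ} (hg : ∀ k, RapidDecay (g k))
    (hderiv : ∀ k, ∀ s > (0 : ℝ), HasDerivAt (g k) (g (k + 1) s) s) {ν : ℂ}
    (hν : -1 < ν.re) (n : ℕ) :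
    ∃ C : ℝ, ∀ t > (0 : ℝ), t ^ n * ‖cliffordTransform ν (g 0) t‖ ≤ C * (1 + t) := by
  obtain ⟨C, hC0, hC⟩ := exists_pow_mul_norm_besselClifford_le n hν
  have hG := (((hg (2 * n)).mul_pow n).mul_one_add).integrableOn hν
  refine ⟨C * ∫ s in Ioi (0 : ℝ), ‖g (2 * n) s * (s : ℂ) ^ n * (1 + s : ℂ) * (s : ℂ) ^ ν‖,
    fun t ht => ?_⟩
  rw [cliffordTransform_eq_iterate hg hderiv hν ht (2 * n)]
  have h := norm_integral_le_of_norm_le (μ := volume.restrict (Ioi (0 : ℝ)))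
    (f := fun s : ℝ => (t : ℂ) ^ n * (g (2 * n) s *
      besselClifford (ν + (2 * n : ℕ)) (t * s) * (s : ℂ) ^ (ν + (2 * n : ℕ))))
    (hG.norm.const_mul (C * (1 + t)))
    (ae_restrict_of_forall_mem measurableSet_Ioi fun s hs => ?_)
  · rw [integral_const_mul, integral_const_mul, norm_mul, norm_pow, Complex.norm_real,
      Real.norm_of_nonneg ht.le] at h
    rw [norm_mul, norm_pow, norm_neg, norm_one, one_pow, one_mul]
    exact h.trans (le_of_eq (by ring))
  · have hs' : (0 : ℝ) < s := hs
    have hs0 : (s : ℂ) ≠ 0 := by exact_mod_cast hs'.ne'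
    have h1 : ‖(1 + s : ℂ)‖ = 1 + s := by
      rw [← Complex.ofReal_one, ← Complex.ofReal_add, Complex.norm_real,
        Real.norm_of_nonneg (by positivity)]
    rw [Complex.cpow_add _ _ hs0, Complex.cpow_natCast]
    simp only [norm_mul, norm_pow, h1, Complex.norm_real, Real.norm_of_nonneg ht.le,
      Real.norm_of_nonneg hs'.le]
    have h2 : (t * s) ^ n * ‖besselClifford (ν + (2 * n : ℕ)) (t * s)‖ ≤
        C * ((1 + t) * (1 + s)) :=
      (hC _ (by positivity)).trans (by gcongr; nlinarith)
    calc _ = ‖g (2 * n) s‖ * s ^ n * ((t * s) ^ n *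
          ‖besselClifford (ν + (2 * n : ℕ)) (t * s)‖) * ‖(s : ℂ) ^ ν‖ := by
          rw [mul_pow, two_mul, pow_add]; ring
      _ ≤ ‖g (2 * n) s‖ * s ^ n * (C * ((1 + t) * (1 + s))) * ‖(s : ℂ) ^ ν‖ := by gcongr
      _ = _ := by ring

theorem rapidDecay_cliffordTransform {g : ℕ → ℝ → ℂ} (hg : ∀ k, RapidDecay (g k))
    (hderiv : ∀ k, ∀ s > (0 : ℝ), HasDerivAt (g k) (g (k + 1) s) s) {ν : ℂ}
    (hν : -1 < ν.re) : RapidDecay (cliffordTransform ν (g 0)) := by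
  refine ⟨(hg 0).continuousOn_cliffordTransform hν, fun m => ?_⟩
  obtain ⟨A, hA⟩ := exists_pow_mul_norm_cliffordTransform_le hg hderiv hν m
  obtain ⟨B, hB⟩ := exists_pow_mul_norm_cliffordTransform_le hg hderiv hν (m + 1)
  refine ⟨A + B, fun t ht => ?_⟩
  have h1 := hA t ht
  have h2 := hB t ht
  refine le_of_mul_le_mul_right ?_ (by positivity : 0 < 1 + t)
  calc _ = t ^ m * ‖cliffordTransform ν (g 0) t‖ +
        t ^ (m + 1) * ‖cliffordTransform ν (g 0) t‖ := by ring
    _ ≤ _ := by linarith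

theorem RapidDecay.integral_cliffordTransform_mul {f g : ℝ → ℂ} (hf : RapidDecay f)
    (hg : RapidDecay g) {ν : ℂ} (hν : -1 < ν.re) :
    ∫ t in Ioi (0 : ℝ), cliffordTransform ν f t * g t * (t : ℂ) ^ ν =
      ∫ s in Ioi (0 : ℝ), f s * cliffordTransform ν g s * (s : ℂ) ^ ν := by
  obtain ⟨C, hC0, hC⟩ := exists_norm_besselClifford_le hν
  let F : ℝ → ℝ → ℂ := fun t s =>
    (f s * (s : ℂ) ^ ν) * (g t * (t : ℂ) ^ ν) * besselClifford ν (t * s)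
  have hF : Integrable (Function.uncurry F)
      ((volume.restrict (Ioi (0 : ℝ))).prod (volume.restrict (Ioi (0 : ℝ)))) := by
    have hdom := ((hg.mul_one_add.integrableOn hν).norm.mul_prod
      (hf.mul_one_add.integrableOn hν).norm).const_mul C
    refine hdom.mono' ?_ ?_
    · have h1 := ((hg.integrableOn hν).mul_prod (hf.integrableOn hν)).aestronglyMeasurable
      have h2 : Continuous fun p : ℝ × ℝ => besselClifford ν (p.1 * p.2) :=
        (continuous_besselClifford hν).comp (by fun_prop)
      refine (h1.mul h2.aestronglyMeasurable).congr (Eventually.of_forall fun p => ?_)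
      simp only [F, Function.uncurry, Pi.mul_apply]
      ring
    · rw [Measure.prod_restrict]
      refine ae_restrict_of_forall_mem (measurableSet_Ioi.prod measurableSet_Ioi) ?_
      rintro ⟨t, s⟩ ⟨ht, hs⟩
      have ht' : (0 : ℝ) < t := ht
      have hs' : (0 : ℝ) < s := hs
      have hn : ∀ r : ℝ, 0 < r → ‖(1 + r : ℂ)‖ = 1 + r := fun r hr => by
        rw [← Complex.ofReal_one, ← Complex.ofReal_add, Complex.norm_real,
          Real.norm_of_nonneg (by positivity)]
      simp only [F, Function.uncurry, norm_mul, hn t ht', hn s hs']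
      have h2 : ‖besselClifford ν (t * s)‖ ≤ C * ((1 + t) * (1 + s)) :=
        (hC _ (by positivity)).trans (by gcongr; nlinarith)
      calc _ ≤ ‖f s‖ * ‖(s : ℂ) ^ ν‖ * (‖g t‖ * ‖(t : ℂ) ^ ν‖) *
            (C * ((1 + t) * (1 + s))) := by gcongr
        _ = _ := by ring
  have hswap := integral_integral_swap hF
  calc _ = ∫ t in Ioi (0 : ℝ), ∫ s in Ioi (0 : ℝ), F t s := by
        refine integral_congr_ae (Eventually.of_forall fun t => ?_)
        simp only [cliffordTransform, F]
        rw [mul_assoc, ← integral_mul_const]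
        refine integral_congr_ae (Eventually.of_forall fun s => ?_)
        simp only
        ring
    _ = _ := hswap
    _ = _ := by
        refine integral_congr_ae (Eventually.of_forall fun s => ?_)
        simp only [cliffordTransform, F]
        rw [mul_right_comm, ← integral_const_mul]
        refine integral_congr_ae (Eventually.of_forall fun t => ?_)
        simp only [mul_comm t s]
        ring

theorem rapidDecay_exp {a : ℂ} (ha : 0 < a.re) :
    RapidDecay fun s : ℝ => Complex.exp (-(a * s)) := by
  refine ⟨by fun_prop, fun m => ⟨m.factorial / a.re ^ m, fun s hs => ?_⟩⟩
  have h : ‖Complex.exp (-(a * s))‖ = (Real.exp (a.re * s))⁻¹ := by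
    rw [Complex.norm_exp, ← Real.exp_neg]; simp
  have hp := Real.pow_div_factorial_le_exp (a.re * s) (by positivity) m
  rw [h, ← div_eq_mul_inv, div_le_div_iff₀ (Real.exp_pos _) (by positivity)]
  rw [div_le_iff₀ (by positivity)] at hp
  calc _ = (a.re * s) ^ m := by ring
    _ ≤ _ := hp
    _ = _ := by ring

theorem isOpen_rightHalfPlane : IsOpen {a : ℂ | 0 < a.re} :=
  isOpen_lt continuous_const Complex.continuous_re

theorem differentiableAt_integral_exp_mul_cpow {ν : ℂ} (hν : -1 < ν.re) {a : ℂ} (ha : 0 < a.re) :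
    DifferentiableAt ℂ
      (fun a : ℂ => ∫ s in Ioi (0 : ℝ), Complex.exp (-(a * s)) * (s : ℂ) ^ ν) a := by
  have hhalf : 0 < ((a.re / 2 : ℝ) : ℂ).re := by simpa using ha
  have hU : {b : ℂ | a.re / 2 < b.re} ∈ nhds a :=
    (isOpen_lt continuous_const Complex.continuous_re).mem_nhds (by simp; linarith)
  refine (hasDerivAt_integral_of_dominated_loc_of_deriv_le
    (μ := volume.restrict (Ioi 0))
    (F := fun (b : ℂ) (s : ℝ) => Complex.exp (-(b * s)) * (s : ℂ) ^ ν)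
    (bound := fun s : ℝ => ‖Complex.exp (-((a.re / 2 : ℝ) * s)) * (s : ℂ) ^ 1 * (s : ℂ) ^ ν‖)
    (F' := fun (b : ℂ) (s : ℝ) => Complex.exp (-(b * s)) * (-s) * (s : ℂ) ^ ν)
    hU ?_ ((rapidDecay_exp ha).integrableOn hν) ?_ ?_
    (((rapidDecay_exp hhalf).mul_pow 1).integrableOn hν).norm ?_).2.differentiableAt
  · filter_upwards [isOpen_rightHalfPlane.mem_nhds ha] with b hb
    exact ((rapidDecay_exp hb).integrableOn hν).aestronglyMeasurable
  · refine ((((rapidDecay_exp ha).mul_pow 1).integrableOn hν).aestronglyMeasurable.neg).congr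
      (Eventually.of_forall fun s => ?_)
    simp
  · refine ae_restrict_of_forall_mem measurableSet_Ioi fun s hs b hb => ?_
    have hs' : (0 : ℝ) < s := hs
    have hb' : a.re / 2 < b.re := hb
    have hle : (-(b * s)).re ≤ (-(((a.re / 2 : ℝ) : ℂ) * s)).re := by
      rw [Complex.neg_re, Complex.neg_re, Complex.re_mul_ofReal, Complex.re_mul_ofReal,
        Complex.ofReal_re]
      nlinarith
    simp only [norm_mul, norm_neg, pow_one, Complex.norm_exp]
    gcongr
  · refine Eventually.of_forall fun s b _ => ?_
    have h : HasDerivAt (fun b : ℂ => -(b * s)) (-(s : ℂ)) b := by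
      have h := ((hasDerivAt_id b).mul_const (s : ℂ)).neg
      rw [one_mul] at h
      exact h
    exact h.cexp.mul_const _

theorem integral_exp_mul_cpow {ν : ℂ} (hν : -1 < ν.re) {a : ℂ} (ha : 0 < a.re) :
    ∫ s in Ioi (0 : ℝ), Complex.exp (-(a * s)) * (s : ℂ) ^ ν =
      a ^ (-(ν + 1)) * Complex.Gamma (ν + 1) := by
  have hf : AnalyticOnNhd ℂ
      (fun a : ℂ => ∫ s in Ioi (0 : ℝ), Complex.exp (-(a * s)) * (s : ℂ) ^ ν)
      {a : ℂ | 0 < a.re} :=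
    DifferentiableOn.analyticOnNhd
      (fun b hb => (differentiableAt_integral_exp_mul_cpow hν hb).differentiableWithinAt)
      isOpen_rightHalfPlane
  have hg : AnalyticOnNhd ℂ (fun a : ℂ => a ^ (-(ν + 1)) * Complex.Gamma (ν + 1))
      {a : ℂ | 0 < a.re} := by
    refine DifferentiableOn.analyticOnNhd (fun b hb => ?_) isOpen_rightHalfPlane
    exact ((differentiableAt_id.cpow_const (Or.inl hb)).mul_const _).differentiableWithinAt
  have hpre : IsPreconnected {a : ℂ | 0 < a.re} :=
    (convex_halfSpace_re_gt 0).isPreconnected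
  refine hf.eqOn_of_preconnected_of_frequently_eq hg hpre (z₀ := 1) (by simp) ?_ ha
  have hreal : ∀ r : ℝ, 0 < r →
      ∫ s in Ioi (0 : ℝ), Complex.exp (-((r : ℂ) * s)) * (s : ℂ) ^ ν =
        (r : ℂ) ^ (-(ν + 1)) * Complex.Gamma (ν + 1) := by
    intro r hr
    have h := Complex.integral_cpow_mul_exp_neg_mul_Ioi (a := ν + 1) (by simp; linarith) hr
    rw [add_sub_cancel_right] at h
    simp only [mul_comm (Complex.exp _)]
    rw [h, one_div, Complex.inv_cpow_ofReal_nonneg hr.le, Complex.cpow_neg]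
  have htend : Tendsto (fun r : ℝ => (r : ℂ)) (nhdsWithin 1 {1}ᶜ) (nhdsWithin 1 {1}ᶜ) := by
    refine tendsto_nhdsWithin_iff.2 ⟨?_, ?_⟩
    · have := Complex.continuous_ofReal.tendsto (1 : ℝ)
      rw [Complex.ofReal_one] at this
      exact this.mono_left nhdsWithin_le_nhds
    · filter_upwards [self_mem_nhdsWithin] with r hr
      simpa using hr
  refine htend.frequently (Eventually.frequently ?_)
  filter_upwards [nhdsWithin_le_nhds (Ioi_mem_nhds (one_pos (α := ℝ)))] with r hr
  exact hreal r hr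

theorem norm_inv_Gamma_mul_Gamma_re_le {ν : ℂ} (hν : -1 < ν.re) (k : ℕ) :
    ‖(Complex.Gamma (ν + k + 1))⁻¹‖ * Real.Gamma (ν.re + k + 1) ≤
      ‖(Complex.Gamma (ν + 1))⁻¹‖ * Real.Gamma (ν.re + 1) := by
  induction k with
  | zero => simp
  | succ k ih =>
    have hk : (0 : ℝ) ≤ k := k.cast_nonneg
    have hpos : 0 < ν.re + k + 1 := by linarith
    have hle := re_add_le_norm ν k
    have hG := Real.Gamma_pos_of_pos hpos
    have h2 := add_natCast_add_one_ne_zero hν k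
    push_cast
    rw [show ν + ((k : ℂ) + 1) + 1 = ν + k + 1 + 1 by ring, Complex.Gamma_add_one _ h2,
      show ν.re + ((k : ℝ) + 1) + 1 = ν.re + k + 1 + 1 by ring, Real.Gamma_add_one hpos.ne',
      mul_inv, norm_mul]
    refine le_trans ?_ ih
    have h3 : ‖(ν + k + 1)⁻¹‖ * (ν.re + k + 1) ≤ 1 := by
      rw [norm_inv, inv_mul_le_iff₀ (by linarith)]; linarith
    calc _ = (‖(ν + k + 1)⁻¹‖ * (ν.re + k + 1)) *
          (‖(Complex.Gamma (ν + k + 1))⁻¹‖ * Real.Gamma (ν.re + k + 1)) := by ring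
      _ ≤ 1 * _ := by gcongr
      _ = _ := one_mul _

theorem integral_norm_exp_mul_cpow {ν : ℂ} (hν : -1 < ν.re) {a : ℂ} (ha : 0 < a.re) :
    ∫ s in Ioi (0 : ℝ), ‖Complex.exp (-(a * s)) * (s : ℂ) ^ ν‖ =
      (a.re⁻¹) ^ (ν.re + 1) * Real.Gamma (ν.re + 1) := by
  have h := Real.integral_rpow_mul_exp_neg_mul_Ioi (a := ν.re + 1) (by linarith) ha
  rw [one_div, add_sub_cancel_right] at h
  rw [← h]
  refine setIntegral_congr_fun measurableSet_Ioi fun s hs => ?_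
  simp only [norm_mul]
  rw [norm_ofReal_cpow hs, Complex.norm_exp, mul_comm]
  simp

theorem cliffordTransform_exp {ν : ℂ} (hν : -1 < ν.re) {a : ℂ} (ha : 0 < a.re) {t : ℝ}
    (ht : 0 < t) :
    cliffordTransform ν (fun s : ℝ => Complex.exp (-(a * s))) t =
      a ^ (-(ν + 1)) * Complex.exp (-(a⁻¹ * t)) := by
  have ha0 : a ≠ 0 := by rintro rfl; simp at ha
  have hνk : ∀ k : ℕ, -1 < (ν + k).re := fun k => by
    have : (0 : ℝ) ≤ k := k.cast_nonneg
    simp; linarith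
  let F : ℕ → ℝ → ℂ := fun k s =>
    cliffordCoeff ν k * (t : ℂ) ^ k * (Complex.exp (-(a * s)) * (s : ℂ) ^ (ν + k))
  have hFint : ∀ k, IntegrableOn (F k) (Ioi 0) := fun k =>
    ((rapidDecay_exp ha).integrableOn (hνk k)).const_mul _
  have hFsum : Summable fun k => ∫ s in Ioi (0 : ℝ), ‖F k s‖ := by
    set M := ‖(Complex.Gamma (ν + 1))⁻¹‖ * Real.Gamma (ν.re + 1)
    refine Summable.of_nonneg_of_le (fun k => integral_nonneg fun s => norm_nonneg _) (fun k => ?_)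
      ((Real.summable_pow_div_factorial (t * a.re⁻¹)).mul_left (M * (a.re⁻¹) ^ (ν.re + 1)))
    simp only [F]
    rw [show (fun s : ℝ => ‖cliffordCoeff ν k * (t : ℂ) ^ k *
        (Complex.exp (-(a * s)) * (s : ℂ) ^ (ν + k))‖) = fun s : ℝ =>
        ‖cliffordCoeff ν k * (t : ℂ) ^ k‖ * ‖Complex.exp (-(a * s)) * (s : ℂ) ^ (ν + k)‖ from
        funext fun s => norm_mul _ _, integral_const_mul, integral_norm_exp_mul_cpow (hνk k) ha]
    have hre : (ν + k).re = ν.re + k := by simp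
    have hi : 0 < a.re⁻¹ := inv_pos.2 ha
    rw [hre, norm_mul, norm_pow, Complex.norm_real, Real.norm_of_nonneg ht.le,
      norm_cliffordCoeff, show ν.re + (k : ℝ) + 1 = ν.re + 1 + k by ring,
      Real.rpow_add hi, Real.rpow_natCast]
    have hM := norm_inv_Gamma_mul_Gamma_re_le hν k
    rw [show ν.re + (k : ℝ) + 1 = ν.re + 1 + k by ring] at hM
    calc _ = (‖(Complex.Gamma (ν + k + 1))⁻¹‖ * Real.Gamma (ν.re + 1 + k)) *
          ((a.re⁻¹) ^ (ν.re + 1) * ((t * a.re⁻¹) ^ k / k.factorial)) := by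
          rw [mul_pow]; ring
      _ ≤ M * ((a.re⁻¹) ^ (ν.re + 1) * ((t * a.re⁻¹) ^ k / k.factorial)) := by gcongr
      _ = _ := by ring
  have hsum := hasSum_integral_of_summable_integral_norm hFint hFsum
  have hlhs : cliffordTransform ν (fun s : ℝ => Complex.exp (-(a * s))) t =
      ∫ s in Ioi (0 : ℝ), ∑' k, F k s := by
    refine setIntegral_congr_fun measurableSet_Ioi fun s hs => ?_
    have hs0 : (s : ℂ) ≠ 0 := by exact_mod_cast (ne_of_gt hs)
    simp only [besselClifford, F]
    rw [mul_right_comm, ← tsum_mul_left]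
    refine tsum_congr fun k => ?_
    rw [Complex.cpow_add _ _ hs0, Complex.cpow_natCast]
    push_cast
    ring
  have hterm : ∀ k, ∫ s in Ioi (0 : ℝ), F k s =
      a ^ (-(ν + 1)) * ((-(a⁻¹ * t)) ^ k / (k.factorial : ℂ)) := by
    intro k
    simp only [F]
    rw [integral_const_mul, integral_exp_mul_cpow (hνk k) ha,
      show -(ν + k + 1) = -(ν + 1) - (k : ℂ) by ring, Complex.cpow_sub _ _ ha0,
      Complex.cpow_natCast, cliffordCoeff, Complex.Gamma_nat_eq_factorial]
    have hG := Gamma_add_natCast_add_one_ne_zero hν k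
    have hk : (k.factorial : ℂ) ≠ 0 := by exact_mod_cast k.factorial_ne_zero
    rw [neg_pow (a⁻¹ * (t : ℂ)), mul_pow, inv_pow]
    field_simp
  rw [hlhs]
  refine hsum.unique ?_
  simp only [hterm]
  refine HasSum.mul_left _ ?_
  rw [Complex.exp_eq_exp_ℂ]
  exact NormedSpace.expSeries_div_hasSum_exp _

theorem eq_zero_of_laplace_eq_zero {h : ℝ → ℂ} (hc : ContinuousOn h (Ioi 0))
    (h_integrable : IntegrableOn (fun s : ℝ => Complex.exp (-(1 * s)) * h s) (Ioi 0))
    (hzero : ∀ a : ℂ, a.re = 1 → ∫ s in Ioi (0 : ℝ), Complex.exp (-(a * s)) * h s = 0)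
    {x : ℝ} (hx : 0 < x) : h x = 0 := by
  let G : ℝ → ℂ := (Ioi (0 : ℝ)).indicator fun s : ℝ => Complex.exp (-(1 * s)) * h s
  have hG : Integrable G := h_integrable.integrable_indicator measurableSet_Ioi
  have hF : FourierTransform.fourier G = 0 := by
    funext w
    rw [Real.fourier_real_eq_integral_exp_smul]
    have := hzero (1 + 2 * Real.pi * w * Complex.I) (by simp)
    rw [← integral_indicator measurableSet_Ioi] at this
    rw [Pi.zero_apply, ← this]
    refine integral_congr_ae (Eventually.of_forall fun s => ?_)
    by_cases hs : s ∈ Ioi (0 : ℝ)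
    · simp only [G, indicator_of_mem hs, smul_eq_mul]
      rw [← mul_assoc, ← Complex.exp_add]
      congr 2
      push_cast
      ring
    · simp only [G, indicator_of_notMem hs, smul_zero]
  have hcont : ContinuousAt G x := by
    have h1 : ContinuousAt (fun s : ℝ => Complex.exp (-(1 * s)) * h s) x :=
      ContinuousAt.mul (by fun_prop) (hc.continuousAt (Ioi_mem_nhds hx))
    refine h1.congr ?_
    filter_upwards [Ioi_mem_nhds hx] with s hs
    simp only [G, indicator_of_mem hs]
  have hinv := hG.fourierInv_fourier_eq (by rw [hF]; exact integrable_zero _ _ _) hcont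
  rw [hF] at hinv
  have hGx : G x = 0 := by
    rw [← hinv, Real.fourierInv_eq]
    simp
  simpa [G, indicator_of_mem (mem_Ioi.2 hx)] using hGx

theorem cliffordTransform_congr {ν : ℂ} {f g : ℝ → ℂ} (h : ∀ s > (0 : ℝ), f s = g s) :
    cliffordTransform ν f = cliffordTransform ν g :=
  funext fun t => setIntegral_congr_fun measurableSet_Ioi fun s hs => by simp only [h s hs]

theorem cliffordTransform_involutive {f : ℝ → ℂ} (hf : RapidDecay f) {ν : ℂ} (hν : -1 < ν.re)
    (hTf : RapidDecay (cliffordTransform ν f)) {x : ℝ} (hx : 0 < x) :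
    cliffordTransform ν (cliffordTransform ν f) x = f x := by
  set T := cliffordTransform ν
  have hTTc := hTf.continuousOn_cliffordTransform hν
  obtain ⟨C, hC⟩ := hTf.exists_norm_cliffordTransform_le hν
  have hexp : ∀ a : ℂ, 0 < a.re → RapidDecay fun s : ℝ => Complex.exp (-(a * s)) * T (T f) s :=
    fun a ha => (rapidDecay_exp ha).mul_of_linear_bound hTTc hC
  have hfb : ∃ A : ℝ, ∀ s > (0 : ℝ), ‖f s‖ ≤ A * (1 + s) := by
    obtain ⟨A, hA⟩ := hf.bound 0
    refine ⟨A, fun s hs => ?_⟩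
    have := hA s hs
    rw [pow_zero, one_mul] at this
    nlinarith [(norm_nonneg _).trans this]
  obtain ⟨A, hA⟩ := hfb
  have hexpf : ∀ a : ℂ, 0 < a.re → RapidDecay fun s : ℝ => Complex.exp (-(a * s)) * f s :=
    fun a ha => (rapidDecay_exp ha).mul_of_linear_bound hf.continuousOn hA
  have hlap : ∀ a : ℂ, 0 < a.re →
      ∫ s in Ioi (0 : ℝ), Complex.exp (-(a * s)) * T (T f) s * (s : ℂ) ^ ν =
        ∫ s in Ioi (0 : ℝ), Complex.exp (-(a * s)) * f s * (s : ℂ) ^ ν := by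
    intro a ha
    have ha0 : a ≠ 0 := by rintro rfl; simp at ha
    have hai : 0 < a⁻¹.re := by
      rw [Complex.inv_re]; exact div_pos ha (Complex.normSq_pos.2 ha0)
    have harg : a.arg ≠ Real.pi := by
      intro h
      have := (Complex.arg_eq_pi_iff.1 h).1
      linarith
    calc ∫ s in Ioi (0 : ℝ), Complex.exp (-(a * s)) * T (T f) s * (s : ℂ) ^ ν
        = ∫ s in Ioi (0 : ℝ), T (T f) s * Complex.exp (-(a * s)) * (s : ℂ) ^ ν := by
          simp only [mul_comm (Complex.exp _)]
      _ = ∫ t in Ioi (0 : ℝ), T f t * T (fun s : ℝ => Complex.exp (-(a * s))) t * (t : ℂ) ^ ν :=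
          hTf.integral_cliffordTransform_mul (rapidDecay_exp ha) hν
      _ = ∫ t in Ioi (0 : ℝ), a ^ (-(ν + 1)) *
            (T f t * Complex.exp (-(a⁻¹ * t)) * (t : ℂ) ^ ν) := by
          refine setIntegral_congr_fun measurableSet_Ioi fun t ht => ?_
          simp only [T]
          rw [cliffordTransform_exp hν ha ht]
          ring
      _ = a ^ (-(ν + 1)) * ∫ s in Ioi (0 : ℝ),
            f s * T (fun s : ℝ => Complex.exp (-(a⁻¹ * s))) s * (s : ℂ) ^ ν := by
          rw [integral_const_mul, hf.integral_cliffordTransform_mul (rapidDecay_exp hai) hν]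
      _ = _ := by
          rw [← integral_const_mul]
          refine setIntegral_congr_fun measurableSet_Ioi fun s hs => ?_
          simp only [T]
          rw [cliffordTransform_exp hν hai hs, inv_inv, Complex.inv_cpow _ _ harg]
          have : a ^ (-(ν + 1)) ≠ 0 := by simp [Complex.cpow_eq_zero_iff, ha0]
          field_simp
  have hone : (0 : ℝ) < (1 : ℂ).re := by simp
  have hsub : ∀ a : ℂ, ∀ s : ℝ, Complex.exp (-(a * s)) * ((T (T f) s - f s) * (s : ℂ) ^ ν) =
      Complex.exp (-(a * s)) * T (T f) s * (s : ℂ) ^ ν -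
        Complex.exp (-(a * s)) * f s * (s : ℂ) ^ ν := fun a s => by ring
  have hx0 : (x : ℂ) ≠ 0 := by exact_mod_cast hx.ne'
  have key := eq_zero_of_laplace_eq_zero (h := fun s : ℝ => (T (T f) s - f s) * (s : ℂ) ^ ν)
    ?_ ?_ ?_ hx
  · rcases mul_eq_zero.1 key with h | h
    · exact sub_eq_zero.1 h
    · exact absurd (Complex.cpow_eq_zero_iff _ _ |>.1 h).1 hx0
  · refine (hTTc.sub hf.continuousOn).mul fun s hs => ?_
    exact (Complex.continuousAt_ofReal_cpow_const s ν
      (Or.inr (ne_of_gt hs))).continuousWithinAt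
  · simp only [hsub]
    exact ((hexp 1 hone).integrableOn hν).sub ((hexpf 1 hone).integrableOn hν)
  · intro a ha
    have ha' : 0 < a.re := by rw [ha]; exact one_pos
    simp only [hsub]
    rw [integral_sub ((hexp a ha').integrableOn hν) ((hexpf a ha').integrableOn hν), hlap a ha',
      sub_self]

theorem besselJ_eq_mul_besselClifford (ν : ℂ) {z : ℝ} (hz : 0 < z) :
    besselJ ν z = ((z : ℂ) / 2) ^ ν * besselClifford ν (z ^ 2 / 4) := by
  have hz2 : (z : ℂ) / 2 ≠ 0 := by
    have : (z : ℂ) ≠ 0 := by exact_mod_cast hz.ne'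
    simpa using this
  rw [besselJ, besselClifford, ← tsum_mul_left]
  refine tsum_congr fun k => ?_
  have hpow : ((z : ℂ) / 2) ^ (2 * (k : ℂ)) = (((z ^ 2 / 4 : ℝ) : ℂ)) ^ k := by
    rw [show (2 * (k : ℂ)) = ((2 * k : ℕ) : ℂ) by push_cast; ring, Complex.cpow_natCast, pow_mul]
    congr 1
    push_cast
    ring
  rw [Complex.cpow_add _ _ hz2, hpow, cliffordCoeff]
  ring

/-- The substitution `s = y² / 2`, `t = x² / 2` turns the Hankel transform into the
Clifford transform. -/
theorem hankel_eq_cliffordTransform (ν : ℂ) (φ : ℝ → ℂ) {x : ℝ} (hx : 0 < x) :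
    hankel ν φ x = cliffordTransform ν (fun s => φ (√(2 * s))) (x ^ 2 / 2) := by
  let F : ℝ → ℂ := fun s => φ (√(2 * s)) * besselClifford ν (x ^ 2 / 2 * s) * (s : ℂ) ^ ν
  have hscale := integral_comp_mul_left_Ioi F 0 (b := (1 / 2 : ℝ)) (by norm_num)
  have hsq := integral_comp_rpow_Ioi (fun u : ℝ => F (1 / 2 * u)) (p := 2) two_ne_zero
  rw [mul_zero] at hscale
  have hF : ∫ s in Ioi (0 : ℝ), F s =
      (1 / 2 : ℝ) • ∫ y in Ioi (0 : ℝ),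
        (|(2 : ℝ)| * y ^ ((2 : ℝ) - 1)) • F (1 / 2 * y ^ (2 : ℝ)) := by
    rw [hsq, hscale, smul_smul]
    norm_num
  have hx0 : (x : ℂ) ≠ 0 := by exact_mod_cast hx.ne'
  change _ = ∫ s in Ioi (0 : ℝ), F s
  rw [hF, hankel, ← integral_const_mul, ← integral_smul]
  refine setIntegral_congr_fun measurableSet_Ioi fun y hy => ?_
  have hy : (0 : ℝ) < y := hy
  have hy0 : (y : ℂ) ≠ 0 := by exact_mod_cast hy.ne'
  have hsqrt : √(2 * (1 / 2 * y ^ 2)) = y := by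
    rw [show 2 * (1 / 2 * y ^ 2) = y ^ 2 by ring, Real.sqrt_sq hy.le]
  have harg : (x * y) ^ 2 / 4 = x ^ 2 / 2 * (1 / 2 * y ^ 2) := by ring
  have hleft : (((x * y : ℝ) : ℂ) / 2) ^ ν = (x : ℂ) ^ ν * ((y : ℂ) ^ ν * (1 / 2 : ℂ) ^ ν) := by
    have := Complex.mul_cpow_ofReal_nonneg hx.le (by positivity : 0 ≤ y * (1 / 2)) ν
    have h2 := Complex.mul_cpow_ofReal_nonneg hy.le (by positivity : (0 : ℝ) ≤ 1 / 2) ν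
    rw [← Complex.ofReal_mul] at h2
    rw [h2] at this
    push_cast at this ⊢
    rw [← this]
    congr 1
    ring
  have hright : (((1 / 2 * y ^ 2 : ℝ) : ℂ)) ^ ν = (1 / 2 : ℂ) ^ ν * ((y : ℂ) ^ ν * (y : ℂ) ^ ν) := by
    have := Complex.mul_cpow_ofReal_nonneg (by positivity : (0 : ℝ) ≤ 1 / 2)
      (by positivity : 0 ≤ y * y) ν
    have h2 := Complex.mul_cpow_ofReal_nonneg hy.le hy.le ν
    rw [← Complex.ofReal_mul] at h2
    rw [h2] at this
    push_cast at this ⊢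
    rw [← this]
    congr 1
    ring
  have hxν : (x : ℂ) ^ ν ≠ 0 := by simp [Complex.cpow_eq_zero_iff, hx0]
  simp only [F]
  rw [Real.rpow_two, show (2 : ℝ) - 1 = 1 by norm_num, Real.rpow_one, hsqrt, ← harg,
    besselJ_eq_mul_besselClifford ν (mul_pos hx hy), hleft, hright, Complex.cpow_neg,
    Complex.cpow_add _ _ hy0, Complex.cpow_one, abs_of_pos two_pos]
  simp only [Complex.real_smul]
  push_cast
  field_simp

theorem contDiffOn_DIter {φ : ℝ → ℂ} (hφ : ContDiffOn ℝ (⊤ : ℕ∞) φ (Ioi 0)) (k : ℕ) :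
    ContDiffOn ℝ (⊤ : ℕ∞) (DIter k φ) (Ioi 0) := by
  induction k with
  | zero => exact hφ
  | succ k ih =>
    have hinv : ContDiffOn ℝ (⊤ : ℕ∞) (fun x : ℝ => 1 / (x : ℂ)) (Ioi 0) := by
      simp only [one_div]
      refine ContDiffOn.inv (f := fun x : ℝ => (x : ℂ)) Complex.ofRealCLM.contDiff.contDiffOn
        fun x hx => ?_
      exact_mod_cast (ne_of_gt hx : x ≠ 0)
    exact hinv.mul (ih.deriv_of_isOpen isOpen_Ioi (by simp))

theorem hasDerivAt_DIter_comp_sqrt {φ : ℝ → ℂ} (hφ : ContDiffOn ℝ (⊤ : ℕ∞) φ (Ioi 0)) (k : ℕ)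
    {s : ℝ} (hs : 0 < s) :
    HasDerivAt (fun s => DIter k φ (√(2 * s))) (DIter (k + 1) φ (√(2 * s))) s := by
  have hpos : 0 < √(2 * s) := Real.sqrt_pos.mpr (by positivity)
  have hd : HasDerivAt (DIter k φ) (deriv (DIter k φ) (√(2 * s))) (√(2 * s)) :=
    (((contDiffOn_DIter hφ k).differentiableOn (by simp)).differentiableAt
      (isOpen_Ioi.mem_nhds hpos)).hasDerivAt
  have hsqrt : HasDerivAt (fun s : ℝ => √(2 * s)) (1 / √(2 * s)) s := by
    convert! ((hasDerivAt_id s).const_mul 2).sqrt (by simpa using hs.ne') using 1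
    simp only [id]
    field_simp
  convert! hd.scomp s hsqrt using 1
  simp [DIter]

theorem SPlus.rapidDecay_DIter_comp_sqrt {φ : ℝ → ℂ} (hφ : SPlus φ) (k : ℕ) :
    RapidDecay fun s => DIter k φ (√(2 * s)) := by
  refine ⟨fun s hs => (hasDerivAt_DIter_comp_sqrt hφ.1 k hs).continuousAt.continuousWithinAt,
    fun m => ?_⟩
  obtain ⟨C, hC⟩ := hφ.2 (2 * m) k
  refine ⟨C, fun s hs => ?_⟩
  have hpos : 0 < √(2 * s) := Real.sqrt_pos.mpr (by positivity)
  refine le_trans ?_ (hC _ hpos)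
  rw [norm_mul, norm_pow, Complex.norm_real, Real.norm_of_nonneg hpos.le, pow_mul,
    Real.sq_sqrt (by positivity)]
  gcongr
  linarith

/-- Inversion formula for the modified Hankel transform: for `Re ν > -1` and `φ ∈ 𝒮⁺`,
`𝓗_ν(𝓗_ν(φ))(x) = φ(x)` for every `x > 0`. -/
theorem hankel_inversion (ν : ℂ) (hν : -1 < ν.re) (φ : ℝ → ℂ) (hφ : SPlus φ) :
    ∀ x > (0:ℝ), hankel ν (hankel ν φ) x = φ x := by
  intro x hx
  have hf : RapidDecay fun s => φ (√(2 * s)) := hφ.rapidDecay_DIter_comp_sqrt 0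
  have hTf : RapidDecay (cliffordTransform ν fun s => φ (√(2 * s))) :=
    rapidDecay_cliffordTransform hφ.rapidDecay_DIter_comp_sqrt
      (fun k _ hs => hasDerivAt_DIter_comp_sqrt hφ.1 k hs) hν
  have hinner : ∀ t > (0 : ℝ), hankel ν φ (√(2 * t)) =
      cliffordTransform ν (fun s => φ (√(2 * s))) t := by
    intro t ht
    rw [hankel_eq_cliffordTransform ν φ (Real.sqrt_pos.mpr (by positivity)),
      Real.sq_sqrt (by positivity), mul_div_cancel_left₀ t two_ne_zero]
  rw [hankel_eq_cliffordTransform ν _ hx, cliffordTransform_congr hinner,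
    cliffordTransform_involutive hf hν hTf (by positivity),
    mul_div_cancel₀ _ two_ne_zero, Real.sqrt_sq hx.le]
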